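/- Let N ≥ 3, α > 0, p = N/(N-2), u₀, u₁ ∈ L¹_loc(Ω^c), and let f ∈ L¹(∂Ω) satisfy ∫_{∂Ω} f dσ > 0. Then the exterior Robin damped wave problem u_tt - Δu + u_t = |u|^p in Q, ∂u/∂ν + αu = f on Γ, u(0,·) = u₀, u_t(0,·) = u₁, possesses no global in time weak solution. -/

import Mathlib

/-!
The proof is the test function method with a logarithmic cutoff. In the variable `s = log |x|²` let
`φ (t, x) = χ (t / T - 3) ^ N * χ (s / L) ^ N * H (x)`, where `χ` is a smooth cutoff and
`H = (N - 2 + α) / α - |x| ^ (2 - N)` is harmonic, bounded between positive constants on the exterior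
domain, and satisfies the Robin condition. Since `φ` vanishes near `t = 0`, the initial data drop
out, and since `φ` is constant in `x` on the unit sphere, the boundary term is at least
`2 T (N - 2) / α * ∫ f dσ`.

Because `H` is harmonic, `Δφ` only contains derivatives of the cutoff, so
`|Δφ| ≤ D B ^ (N - 2) / (L |x|²)` with `B` the product of the two cutoffs (`exists_profile`,
`lap_radial`). With `T = L e ^ (2L)` the time derivatives obey the same bound on the support
(`exists_test`). Young's inequality with exponents `p = N / (N - 2)` and `N / 2` (`young_cutoff`)
absorbs `∫ |u| ^ p φ` and leaves `∫ (L |x|²) ^ (-N/2)` over `(0, 5T) × {1 ≤ |x| ≤ e ^ L}`, which is a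
constant times `T L ^ (1 - N/2)` (`integral_annulus`). Dividing by `T` (`key_estimate`) and letting
`L → ∞` gives `∫ f dσ ≤ 0`, as `N ≥ 3`.
-/

open MeasureTheory Real Set

noncomputable section

/-- Euclidean space `ℝ^N`. -/
abbrev Euc (N : ℕ) := EuclideanSpace ℝ (Fin N)

/-- The Laplace operator: the trace of the Hessian, computed as the sum of second
directional derivatives along the standard orthonormal basis. -/
noncomputable def lap {N : ℕ} (f : Euc N → ℝ) (x : Euc N) : ℝ :=
  ∑ i : Fin N,
    fderiv ℝ (fun y => fderiv ℝ f y (EuclideanSpace.single i 1)) x (EuclideanSpace.single i 1)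

/-- The exterior domain `Ω^c = ℝ^N \ B(0,1) = {x : |x| ≥ 1}` (closed complement of the
open unit ball). -/
def extDom (N : ℕ) : Set (Euc N) := {x | 1 ≤ ‖x‖}

/-- The surface measure `σ` on the unit sphere `∂Ω`. -/
noncomputable def sphMeasure (N : ℕ) : Measure (Metric.sphere (0 : Euc N) 1) :=
  (volume : Measure (Euc N)).toSphere

/-- The harmonic function `H(x) = (N-2+α)/α - |x|^{2-N}`. -/
noncomputable def Hfun (N : ℕ) (α : ℝ) (x : Euc N) : ℝ :=
  ((N : ℝ) - 2 + α) / α - ‖x‖ ^ ((2 : ℝ) - N)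

/-- An admissible hyperbolic test function: nonnegative on `[0,∞) × Ω^c`, `C²` in `t`
and `C²` in `x` on `(0,∞) × Ω^c`, continuous on `[0,∞) × Ω^c`, vanishing for large `t`
and large `|x|`, satisfying the Robin boundary condition `∂φ/∂ν + αφ = 0` on
`Γ = (0,∞) × ∂Ω` (with `ν(x) = -x`), and with `φ_t`, `φ_tt`, `Δφ` continuous on
`[0,∞) × Ω^c`. -/
structure AdmissibleHyperbolic (N : ℕ) (α : ℝ) (φ : ℝ → Euc N → ℝ) : Prop where
  nonneg : ∀ t x, 0 ≤ t → x ∈ extDom N → 0 ≤ φ t x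
  contDiff_t : ∀ x ∈ extDom N, ContDiffOn ℝ 2 (fun t => φ t x) (Ioi (0 : ℝ))
  contDiff_x : ∀ t ∈ Ioi (0 : ℝ), ContDiffOn ℝ 2 (φ t) (extDom N)
  cont : ContinuousOn (fun q : ℝ × Euc N => φ q.1 q.2) (Ici (0 : ℝ) ×ˢ extDom N)
  vanish_t : ∃ T > 0, ∀ t, T ≤ t → ∀ x, φ t x = 0
  vanish_x : ∃ R > 1, ∀ x : Euc N, R ≤ ‖x‖ → ∀ t, φ t x = 0
  robin : ∀ t ∈ Ioi (0 : ℝ), ∀ x : Euc N, ‖x‖ = 1 →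
    fderiv ℝ (φ t) x (-x) + α * φ t x = 0
  cont_dt : ContinuousOn (fun q : ℝ × Euc N => deriv (fun s => φ s q.2) q.1)
    (Ici (0 : ℝ) ×ˢ extDom N)
  cont_dtt : ContinuousOn (fun q : ℝ × Euc N => deriv (deriv (fun s => φ s q.2)) q.1)
    (Ici (0 : ℝ) ×ˢ extDom N)
  cont_lap : ContinuousOn (fun q : ℝ × Euc N => lap (φ q.1) q.2) (Ici (0 : ℝ) ×ˢ extDom N)

/-- A global (in time) weak solution of the exterior Robin damped wave problem
`u_tt - Δu + u_t = |u|^p` in `Q`, `∂u/∂ν + αu = f` on `Γ`, `u(0,·) = u₀`,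
`u_t(0,·) = u₁`. -/
def IsGlobalWeakSolDampedWave (N : ℕ) (α p : ℝ) (u₀ u₁ f : Euc N → ℝ)
    (u : ℝ → Euc N → ℝ) : Prop :=
  LocallyIntegrableOn (fun q : ℝ × Euc N => |u q.1 q.2| ^ p) (Ici (0 : ℝ) ×ˢ extDom N) volume ∧
  ∀ φ : ℝ → Euc N → ℝ, AdmissibleHyperbolic N α φ →
    (∫ q in Ioi (0 : ℝ) ×ˢ extDom N, |u q.1 q.2| ^ p * φ q.1 q.2)
      + (∫ x in extDom N, (u₀ x + u₁ x) * φ 0 x)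
      - (∫ x in extDom N, u₀ x * deriv (fun s => φ s x) 0)
      + (∫ t in Ioi (0 : ℝ),
          ∫ x : Metric.sphere (0 : Euc N) 1, f x * φ t x ∂(sphMeasure N))
    = (∫ q in Ioi (0 : ℝ) ×ˢ extDom N, u q.1 q.2 * deriv (deriv (fun s => φ s q.2)) q.1)
      - (∫ q in Ioi (0 : ℝ) ×ˢ extDom N, u q.1 q.2 * deriv (fun s => φ s q.2) q.1)
      - ∫ q in Ioi (0 : ℝ) ×ˢ extDom N, u q.1 q.2 * lap (φ q.1) q.2

/-! ### A cutoff with controlled derivatives -/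

/-- A smooth cutoff `χ`, equal to `1` on `[-1, 1]` and to `0` outside `(-2, 2)`, together with the first
two derivatives `P₁`, `P₂` of `χ ^ N`. Raising `χ` to the power `N` makes both derivatives controlled
by `χ ^ (N - 2)`, which is `(χ ^ N) ^ (1/p)` for the critical exponent `p = N / (N - 2)`. -/
theorem exists_cutoff (N : ℕ) (hN : 3 ≤ N) :
    ∃ χ P₁ P₂ : ℝ → ℝ, ∃ M : ℝ, 0 ≤ M ∧ ContDiff ℝ 2 χ ∧ (∀ s, 0 ≤ χ s) ∧ (∀ s, χ s ≤ 1) ∧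
      (∀ s, |s| ≤ 1 → χ s = 1) ∧ (∀ s, 2 ≤ |s| → χ s = 0) ∧
      (∀ s, HasDerivAt (fun r => χ r ^ N) (P₁ s) s) ∧ (∀ s, HasDerivAt P₁ (P₂ s) s) ∧
      Continuous P₁ ∧ Continuous P₂ ∧ P₁ 0 = 0 ∧
      (∀ s, |P₁ s| ≤ M * χ s ^ (N - 2)) ∧ (∀ s, |P₂ s| ≤ M * χ s ^ (N - 2)) := by
  obtain ⟨n, rfl⟩ : ∃ n, N = n + 2 := ⟨N - 2, by omega⟩
  let b : ContDiffBump (0 : ℝ) := ⟨1, 2, by norm_num, by norm_num⟩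
  have hb : ContDiff ℝ 3 (b : ℝ → ℝ) := b.contDiff
  have hb1 : ContDiff ℝ 2 (deriv b) := hb.deriv' (n := 2)
  have hb2 : ContDiff ℝ 1 (deriv (deriv b)) := hb1.deriv' (n := 1)
  have hc1 : HasCompactSupport (deriv b) := b.hasCompactSupport.deriv
  have hc2 : HasCompactSupport (deriv (deriv b)) := hc1.deriv
  obtain ⟨C1, hC1⟩ := hc1.exists_bound_of_continuous hb1.continuous
  obtain ⟨C2, hC2⟩ := hc2.exists_bound_of_continuous hb2.continuous
  have hC10 : 0 ≤ C1 := (norm_nonneg _).trans (hC1 0)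
  have hC20 : 0 ≤ C2 := (norm_nonneg _).trans (hC2 0)
  have d1 : ∀ s, HasDerivAt (b : ℝ → ℝ) (deriv b s) s := fun s =>
    (hb.differentiable (by norm_num) s).hasDerivAt
  have d2 : ∀ s, HasDerivAt (deriv b) (deriv (deriv b) s) s := fun s =>
    (hb1.differentiable (by norm_num) s).hasDerivAt
  have hz : deriv b 0 = 0 := by
    have : (b : ℝ → ℝ) =ᶠ[nhds 0] fun _ => (1 : ℝ) := b.eventuallyEq_one
    rw [this.deriv_eq]; simp
  refine ⟨b, fun s => ((n : ℝ) + 2) * b s ^ (n + 1) * deriv b s,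
    fun s => ((n : ℝ) + 2) * (((n : ℝ) + 1) * b s ^ n * deriv b s * deriv b s
      + b s ^ (n + 1) * deriv (deriv b) s),
    ((n : ℝ) + 2) * C1 + ((n : ℝ) + 2) * (((n : ℝ) + 1) * C1 * C1 + C2),
    by positivity, hb.of_le (by norm_num), fun s => b.nonneg, fun s => b.le_one, ?_, ?_, ?_, ?_,
    ?_, ?_, by simp [hz], ?_, ?_⟩
  · intro s hs
    exact b.one_of_mem_closedBall (by simpa [b] using hs)
  · intro s hs
    exact b.zero_of_le_dist (by simpa [b] using hs)
  · intro s
    refine ((d1 s).pow (n + 2)).congr_deriv ?_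
    push_cast; simp
  · intro s
    refine ((((d1 s).pow (n + 1)).mul (d2 s)).const_mul ((n : ℝ) + 2)).congr_deriv ?_ |>.congr_of_eventuallyEq ?_
    · push_cast; simp
    · exact Filter.Eventually.of_forall fun r => by simp; ring
  · have := hb.continuous; have := hb1.continuous; fun_prop
  · have := hb.continuous; have := hb1.continuous; have := hb2.continuous; fun_prop
  · intro s
    have h0 : 0 ≤ b s := b.nonneg
    have h1 : b s ^ (n + 1) ≤ b s ^ n := pow_le_pow_of_le_one h0 b.le_one (by omega)
    have h2 : |deriv b s| ≤ C1 := hC1 s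
    simp only [Nat.add_sub_cancel]
    rw [abs_mul, abs_mul, abs_of_nonneg (by positivity : 0 ≤ (n : ℝ) + 2), abs_of_nonneg (by positivity : 0 ≤ b s ^ (n+1))]
    calc ((n : ℝ) + 2) * b s ^ (n + 1) * |deriv b s| ≤ ((n : ℝ) + 2) * b s ^ n * C1 := by gcongr
      _ = ((n : ℝ) + 2) * C1 * b s ^ n := by ring
      _ ≤ _ := by
        gcongr
        have : 0 ≤ ((n : ℝ) + 2) * (((n : ℝ) + 1) * C1 * C1 + C2) := by positivity
        linarith
  · intro s
    have h0 : 0 ≤ b s := b.nonneg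
    have h1 : b s ^ (n + 1) ≤ b s ^ n := pow_le_pow_of_le_one h0 b.le_one (by omega)
    have h2 : |deriv b s| ≤ C1 := hC1 s
    have h3 : |deriv (deriv b) s| ≤ C2 := hC2 s
    simp only [Nat.add_sub_cancel]
    rw [abs_mul, abs_of_nonneg (by positivity : 0 ≤ (n : ℝ) + 2)]
    calc ((n : ℝ) + 2) * |((n : ℝ) + 1) * b s ^ n * deriv b s * deriv b s
          + b s ^ (n + 1) * deriv (deriv b) s|
        ≤ ((n : ℝ) + 2) * (((n : ℝ) + 1) * b s ^ n * |deriv b s| * |deriv b s|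
          + b s ^ (n + 1) * |deriv (deriv b) s|) := by
          gcongr
          refine (abs_add_le _ _).trans (le_of_eq ?_)
          rw [abs_mul, abs_mul, abs_mul, abs_mul, abs_of_nonneg (by positivity : 0 ≤ (n : ℝ) + 1),
            abs_of_nonneg (by positivity : 0 ≤ b s ^ n), abs_of_nonneg (by positivity : 0 ≤ b s ^ (n+1))]
      _ ≤ ((n : ℝ) + 2) * (((n : ℝ) + 1) * b s ^ n * C1 * C1 + b s ^ n * C2) := by gcongr
      _ = ((n : ℝ) + 2) * (((n : ℝ) + 1) * C1 * C1 + C2) * b s ^ n := by ring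
      _ ≤ _ := by
        gcongr
        have : 0 ≤ ((n : ℝ) + 2) * C1 := by positivity
        linarith

/-! ### Laplacian of radial functions -/

theorem hasFDerivAt_logNormSq {N : ℕ} {h : ℝ → ℝ} {h' : ℝ} {y : Euc N} (hy : y ≠ 0)
    (hh : HasDerivAt h h' (Real.log (‖y‖ ^ 2))) :
    HasFDerivAt (fun y : Euc N => h (Real.log (‖y‖ ^ 2)))
      ((h' * (2 / ‖y‖ ^ 2)) • innerSL ℝ y) y := by
  have hn : ‖y‖ ^ 2 ≠ 0 := by simpa using hy
  have h1 : HasFDerivAt (fun y : Euc N => ‖y‖ ^ 2) (2 • innerSL ℝ y) y :=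
    (hasStrictFDerivAt_norm_sq y).hasFDerivAt
  have h2 := hh.comp_hasFDerivAt y (h1.log hn)
  refine h2.congr_fderiv ?_
  ext v
  simp; ring

/-- The Laplacian of `c * h (log |x|²)`. In the variable `s = log |x|²` it becomes
`(4 h'' + (2N - 4) h') / |x|²`. -/
theorem lap_radial {N : ℕ} {h h₁ h₂ : ℝ → ℝ} (d1 : ∀ s, HasDerivAt h (h₁ s) s)
    (d2 : ∀ s, HasDerivAt h₁ (h₂ s) s) (c : ℝ) {x : Euc N} (hx : x ≠ 0) :
    lap (fun y : Euc N => c * h (Real.log (‖y‖ ^ 2))) x =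
      c * ((4 * h₂ (Real.log (‖x‖ ^ 2)) + (2 * N - 4) * h₁ (Real.log (‖x‖ ^ 2))) / ‖x‖ ^ 2) := by
  have hn : ‖x‖ ^ 2 ≠ 0 := by simpa using hx
  have key : ∀ i : Fin N,
      fderiv ℝ (fun y => fderiv ℝ (fun y : Euc N => c * h (Real.log (‖y‖ ^ 2))) y
        (EuclideanSpace.single i 1)) x (EuclideanSpace.single i 1)
      = c * (h₂ (Real.log (‖x‖ ^ 2)) * (4 * x i ^ 2 / (‖x‖ ^ 2) ^ 2)
        + h₁ (Real.log (‖x‖ ^ 2)) * (2 / ‖x‖ ^ 2 - 4 * x i ^ 2 / (‖x‖ ^ 2) ^ 2)) := by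
    intro i
    have e1 : (fun y => fderiv ℝ (fun y : Euc N => c * h (Real.log (‖y‖ ^ 2))) y
        (EuclideanSpace.single i 1)) =ᶠ[nhds x]
        fun y => c * (h₁ (Real.log (‖y‖ ^ 2)) * (2 * (‖y‖ ^ 2)⁻¹ * y i)) := by
      filter_upwards [isOpen_ne.mem_nhds hx] with y hy
      rw [((hasFDerivAt_logNormSq hy (d1 _)).const_mul c).fderiv]
      simp [EuclideanSpace.inner_single_right]
      left
      ring
    rw [e1.fderiv_eq]
    have g1 := hasFDerivAt_logNormSq hx (d2 (Real.log (‖x‖ ^ 2)))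
    have g2 : HasFDerivAt (fun y : Euc N => (‖y‖ ^ 2)⁻¹) _ x :=
      (hasDerivAt_inv hn).comp_hasFDerivAt x (hasStrictFDerivAt_norm_sq x).hasFDerivAt
    have g3 : HasFDerivAt (fun y : Euc N => y i) (EuclideanSpace.proj i : Euc N →L[ℝ] ℝ) x :=
      (EuclideanSpace.proj i : Euc N →L[ℝ] ℝ).hasFDerivAt
    have g4 := (g1.mul ((g2.const_mul 2).mul g3)).const_mul c
    refine (congrArg (fun l : Euc N →L[ℝ] ℝ => l (EuclideanSpace.single i 1))
      (HasFDerivAt.fderiv g4)).trans ?_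
    simp [EuclideanSpace.inner_single_right]
    field_simp
    ring
  have hs : ∑ i, x i ^ 2 = ‖x‖ ^ 2 := by
    rw [EuclideanSpace.norm_sq_eq]; simp
  unfold lap
  rw [Finset.sum_congr rfl fun i _ => key i, ← Finset.mul_sum, Finset.sum_add_distrib,
    ← Finset.mul_sum, ← Finset.mul_sum, Finset.sum_sub_distrib, ← Finset.sum_div, ← Finset.mul_sum,
    hs]
  simp
  left
  field_simp

/-! ### Young's inequality and the integral over the annulus -/

/-- Young's inequality with the conjugate exponents `p = N / (N - 2)` and `N / 2`, applied to
`|v| B ^ (N - 2)` and `w`; note `(B ^ (N - 2)) ^ p = B ^ N`. The weight `1 / 3` lets three such terms be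
absorbed by `|v| ^ p φ`. -/
theorem young_cutoff {N : ℕ} (hN : 3 ≤ N) {p : ℝ} (hp : p = (N : ℝ) / ((N : ℝ) - 2))
    {c₀ D : ℝ} (hc₀ : 0 < c₀) (hD : 0 ≤ D) :
    ∃ C : ℝ, 0 ≤ C ∧ ∀ v B w φ g : ℝ, 0 ≤ B → 0 ≤ w → c₀ * B ^ N ≤ φ →
      |g| ≤ D * B ^ (N - 2) * w → |v * g| ≤ 1 / 3 * (|v| ^ p * φ) + C * w ^ ((N : ℝ) / 2) := by
  have hN' : (3 : ℝ) ≤ N := by exact_mod_cast hN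
  have hp0 : 0 < p := by rw [hp]; apply div_pos <;> linarith
  have hp1 : 1 ≤ p := by rw [hp, le_div_iff₀ (by linarith)]; linarith
  have hq1 : 1 ≤ (N : ℝ) / 2 := by linarith
  have hpq : p.HolderConjugate ((N : ℝ) / 2) := by
    rw [Real.holderConjugate_iff]
    refine ⟨by rw [hp, lt_div_iff₀ (by linarith)]; linarith, ?_⟩
    rw [hp]
    have : (N : ℝ) - 2 ≠ 0 := by linarith
    field_simp; ring
  -- `k` is chosen so that `k ^ p = c₀ / 3`, which produces the factor `1 / 3` on the `|v| ^ p φ` term.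
  set k : ℝ := (c₀ / 3) ^ (1 / p) with hk
  have hk0 : 0 < k := by positivity
  have hkp : k ^ p = c₀ / 3 := by
    rw [hk, ← Real.rpow_mul (by positivity), one_div_mul_cancel hp0.ne', Real.rpow_one]
  refine ⟨(D / k) ^ ((N : ℝ) / 2), by positivity, ?_⟩
  intro v B w φ g hB hw hφ hg
  have hBp : (B ^ (N - 2)) ^ p = B ^ N := by
    rw [← Real.rpow_natCast B (N - 2), ← Real.rpow_mul hB, Nat.cast_sub (by omega), hp,
      ← Real.rpow_natCast B N]
    congr 1
    have : (N : ℝ) - 2 ≠ 0 := by linarith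
    push_cast
    field_simp
  have hY := Real.young_inequality_of_nonneg (a := |v| * B ^ (N - 2) * k) (b := D / k * w)
    (by positivity) (by positivity) hpq
  have ha : (|v| * B ^ (N - 2) * k) ^ p = 1 / 3 * (|v| ^ p * (c₀ * B ^ N)) := by
    rw [Real.mul_rpow (by positivity) hk0.le, Real.mul_rpow (by positivity) (by positivity), hBp,
      hkp]
    ring
  have hb : (D / k * w) ^ ((N : ℝ) / 2) = (D / k) ^ ((N : ℝ) / 2) * w ^ ((N : ℝ) / 2) :=
    Real.mul_rpow (by positivity) hw
  calc |v * g| = |v| * |g| := abs_mul _ _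
    _ ≤ |v| * (D * B ^ (N - 2) * w) := by gcongr
    _ = |v| * B ^ (N - 2) * k * (D / k * w) := by field_simp
    _ ≤ _ := hY
    _ ≤ (|v| * B ^ (N - 2) * k) ^ p + (D / k * w) ^ ((N : ℝ) / 2) :=
        add_le_add (div_le_self (by positivity) hp1) (div_le_self (by positivity) hq1)
    _ ≤ _ := by rw [ha, hb]; gcongr

/-- In polar coordinates `(L |x|²) ^ (-N/2)` integrates over `1 ≤ |x| ≤ e ^ L` to a constant times
`L ^ (-N/2) ∫ dr / r = L ^ (1 - N/2)`, which tends to `0` because `N ≥ 3`. -/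
theorem integral_annulus {N : ℕ} (hN : 3 ≤ N) {L : ℝ} (hL : 1 ≤ L) :
    Integrable (fun x : Euc N => (Icc 1 (rexp L)).indicator
      (fun r => ((L * r ^ 2)⁻¹) ^ ((N : ℝ) / 2)) ‖x‖) volume ∧
    ∫ x : Euc N, (Icc 1 (rexp L)).indicator (fun r => ((L * r ^ 2)⁻¹) ^ ((N : ℝ) / 2)) ‖x‖ =
      (N * (volume : Measure (Euc N)).real (Metric.ball 0 1)) * L ^ (1 - (N : ℝ) / 2) := by
  have : Nonempty (Fin N) := ⟨⟨0, by omega⟩⟩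
  have hL0 : 0 < L := by linarith
  have hdim : Module.finrank ℝ (Euc N) = N := by simp
  have heq : ∀ r : ℝ, r ^ (N - 1) • (Icc 1 (rexp L)).indicator
      (fun r => ((L * r ^ 2)⁻¹) ^ ((N : ℝ) / 2)) r =
      (Icc 1 (rexp L)).indicator (fun r => L ^ (-((N : ℝ) / 2)) * r⁻¹) r := by
    intro r
    by_cases hr : r ∈ Icc 1 (rexp L)
    · rw [indicator_of_mem hr, indicator_of_mem hr]
      have hr0 : 0 < r := by linarith [hr.1]
      rw [Real.inv_rpow (by positivity), Real.mul_rpow hL0.le (by positivity), mul_inv,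
        ← Real.rpow_neg hL0.le]
      have : (r ^ 2) ^ ((N : ℝ) / 2) = r ^ N := by
        rw [← Real.rpow_natCast r 2, ← Real.rpow_mul hr0.le, ← Real.rpow_natCast r N]
        congr 1; push_cast; ring
      rw [this, smul_eq_mul]
      obtain ⟨n, rfl⟩ : ∃ n, N = n + 1 := ⟨N - 1, by omega⟩
      simp only [Nat.add_sub_cancel]
      field_simp
      exact (pow_succ r n).symm
    · rw [indicator_of_notMem hr, indicator_of_notMem hr, smul_zero]
  have hsub : Icc 1 (rexp L) ⊆ Ioi (0 : ℝ) := fun r hr => by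
    have := hr.1; simp only [mem_Ioi]; linarith
  have hcont : ContinuousOn (fun r : ℝ => L ^ (-((N : ℝ) / 2)) * r⁻¹) (Icc 1 (rexp L)) :=
    continuousOn_const.mul (continuousOn_inv₀.mono fun r hr => (hsub hr).ne')
  constructor
  · rw [integrable_fun_norm_addHaar, hdim]
    simp_rw [heq]
    exact ((hcont.integrableOn_compact isCompact_Icc).integrable_indicator
      measurableSet_Icc).integrableOn
  · rw [integral_fun_norm_addHaar, hdim]
    simp_rw [heq]
    rw [setIntegral_indicator measurableSet_Icc, inter_eq_self_of_subset_right hsub,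
      integral_Icc_eq_integral_Ioc, ← intervalIntegral.integral_of_le (by simpa using hL0.le),
      intervalIntegral.integral_const_mul, integral_inv_of_pos one_pos (Real.exp_pos L)]
    rw [div_one, Real.log_exp, nsmul_eq_mul, smul_eq_mul, sub_eq_add_neg, Real.rpow_add hL0,
      Real.rpow_one]
    ring

/-! ### The test function -/

/-- The spatial profile `h (s) = χ (s / L) ^ N * ((N - 2) / α + 1 - e ^ (-(N - 2) s / 2))`, `s = log |x|²`.
The second factor is the harmonic function `Hfun`, so the Laplacian only sees derivatives of the
cutoff and is of size `χ ^ (N - 2) / L`. The identity `2 * h₁ 0 = α * h 0` is the Robin condition on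
`|x| = 1`. -/
theorem exists_profile (N : ℕ) (hN : 3 ≤ N) {α : ℝ} (hα : 0 < α) {χ P₁ P₂ : ℝ → ℝ} {M L : ℝ}
    (hL : 1 ≤ L) (hM : 0 ≤ M) (hχ : ContDiff ℝ 2 χ) (h0 : ∀ s, 0 ≤ χ s) (h1 : ∀ s, χ s ≤ 1)
    (hone : ∀ s, |s| ≤ 1 → χ s = 1)
    (d1 : ∀ s, HasDerivAt (fun r => χ r ^ N) (P₁ s) s) (d2 : ∀ s, HasDerivAt P₁ (P₂ s) s)
    (c1 : Continuous P₁) (c2 : Continuous P₂) (hz : P₁ 0 = 0)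
    (b1 : ∀ s, |P₁ s| ≤ M * χ s ^ (N - 2)) (b2 : ∀ s, |P₂ s| ≤ M * χ s ^ (N - 2)) :
    ∃ h h₁ h₂ : ℝ → ℝ, ContDiff ℝ 2 h ∧ (∀ s, HasDerivAt h (h₁ s) s) ∧
      (∀ s, HasDerivAt h₁ (h₂ s) s) ∧ Continuous h₁ ∧ Continuous h₂ ∧
      h 0 = ((N : ℝ) - 2) / α ∧ 2 * h₁ 0 = α * h 0 ∧
      (∀ s, χ (s / L) = 0 → h s = 0) ∧
      (∀ s, 0 ≤ s → ((N : ℝ) - 2) / α * χ (s / L) ^ N ≤ h s) ∧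
      (∀ s, 0 ≤ s → |h s| ≤ (((N : ℝ) - 2) / α + 1) * χ (s / L) ^ (N - 2)) ∧
      (∀ s, 0 ≤ s → |4 * h₂ s + (2 * N - 4) * h₁ s| ≤
        4 * M * ((((N : ℝ) - 2) / α + 1) + ((N : ℝ) - 2)
          + ((N : ℝ) - 2) / 2 * (((N : ℝ) - 2) / α + 1)) * χ (s / L) ^ (N - 2) * L⁻¹) := by
  have hN' : (3 : ℝ) ≤ N := by exact_mod_cast hN
  have hL0 : 0 < L := by linarith
  set c₀ : ℝ := ((N : ℝ) - 2) / α with hc₀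
  have hc₀0 : 0 < c₀ := div_pos (by linarith) hα
  obtain ⟨m, hm⟩ : ∃ m : ℝ, (N : ℝ) - 2 = 2 * m := ⟨((N : ℝ) - 2) / 2, by ring⟩
  have hm0 : 0 < m := by linarith
  have hNm : (2 * N - 4 : ℝ) = 4 * m := by linarith
  rw [hm, hNm]
  have eE : ∀ s, HasDerivAt (fun s => rexp (-m * s)) (-m * rexp (-m * s)) s := fun s => by
    have := ((hasDerivAt_id s).const_mul (-m)).exp
    simpa [mul_comm] using this
  have eP : ∀ s, HasDerivAt (fun s => χ (s / L) ^ N) (P₁ (s / L) * L⁻¹) s := fun s => by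
    have := (d1 (s / L)).comp s ((hasDerivAt_id s).div_const L)
    simpa [Function.comp_def] using this
  have eP1 : ∀ s, HasDerivAt (fun s => P₁ (s / L)) (P₂ (s / L) * L⁻¹) s := fun s => by
    have := (d2 (s / L)).comp s ((hasDerivAt_id s).div_const L)
    simpa [Function.comp_def] using this
  have hcχ := hχ.continuous
  have hEle : ∀ s, 0 ≤ s → rexp (-m * s) ≤ 1 := fun s hs => by
    rw [Real.exp_le_one_iff]; nlinarith
  have hpow : ∀ s, χ s ^ N ≤ χ s ^ (N - 2) := fun s =>
    pow_le_pow_of_le_one (h0 s) (h1 s) (by omega)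
  refine ⟨fun s => χ (s / L) ^ N * (c₀ + 1 - rexp (-m * s)),
    fun s => P₁ (s / L) * L⁻¹ * (c₀ + 1 - rexp (-m * s)) + χ (s / L) ^ N * (m * rexp (-m * s)),
    fun s => P₂ (s / L) * L⁻¹ * L⁻¹ * (c₀ + 1 - rexp (-m * s))
      + 2 * (P₁ (s / L) * L⁻¹) * (m * rexp (-m * s)) - χ (s / L) ^ N * (m * m * rexp (-m * s)),
    ?_, ?_, ?_, by fun_prop, by fun_prop, ?_, ?_, ?_, ?_, ?_, ?_⟩
  · fun_prop
  · intro s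
    refine ((eP s).mul ((eE s).const_sub (c₀ + 1))).congr_deriv ?_
    ring
  · intro s
    refine ((((eP1 s).mul_const L⁻¹).mul ((eE s).const_sub (c₀ + 1))).add
      ((eP s).mul ((eE s).const_mul m))).congr_deriv ?_
    ring
  · simp [hone 0]
  · simp [hone 0, hz]
    rw [hc₀, hm]; field_simp
  · intro s hs
    simp [hs, show N ≠ 0 by omega]
  · intro s hs
    have := hEle s hs
    have h2 : 0 ≤ χ (s / L) ^ N := pow_nonneg (h0 _) _
    rw [mul_comm]
    dsimp only
    gcongr
    linarith
  · intro s hs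
    have := hEle s hs
    have := Real.exp_pos (-m * s)
    have h2 : 0 ≤ χ (s / L) ^ N := pow_nonneg (h0 _) _
    have h3 : 0 ≤ c₀ + 1 - rexp (-m * s) := by linarith
    dsimp only
    rw [abs_of_nonneg (by positivity), mul_comm]
    have := hpow (s / L)
    gcongr
    linarith
  · intro s hs
    have e1 := hEle s hs
    have e0 := Real.exp_pos (-m * s)
    set E := rexp (-m * s)
    set X := χ (s / L) ^ (N - 2)
    have hX : 0 ≤ X := pow_nonneg (h0 _) _
    have hK : |c₀ + 1 - E| ≤ c₀ + 1 := by rw [abs_of_nonneg (by linarith)]; linarith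
    have hE : |E| ≤ 1 := by rw [abs_of_pos e0]; exact e1
    have hLi : |L⁻¹| ≤ 1 := by
      rw [abs_of_pos (by positivity)]; exact inv_le_one_of_one_le₀ hL
    have hLi0 : |L⁻¹| = L⁻¹ := abs_of_pos (by positivity)
    have B1 := b1 (s / L)
    have B2 := b2 (s / L)
    dsimp only
    -- The terms without a derivative of the cutoff cancel: this is the harmonicity of `Hfun`.
    have : 4 * (P₂ (s / L) * L⁻¹ * L⁻¹ * (c₀ + 1 - E) + 2 * (P₁ (s / L) * L⁻¹) * (m * E)
        - χ (s / L) ^ N * (m * m * E)) + 4 * m * (P₁ (s / L) * L⁻¹ * (c₀ + 1 - E)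
        + χ (s / L) ^ N * (m * E))
        = 4 * (P₂ (s / L) * L⁻¹ * (c₀ + 1 - E) + 2 * m * (P₁ (s / L) * E)
          + m * (P₁ (s / L) * (c₀ + 1 - E))) * L⁻¹ := by ring
    rw [this, abs_mul, abs_mul, hLi0, abs_of_pos (by norm_num : (0 : ℝ) < 4)]
    calc 4 * |P₂ (s / L) * L⁻¹ * (c₀ + 1 - E) + 2 * m * (P₁ (s / L) * E)
          + m * (P₁ (s / L) * (c₀ + 1 - E))| * L⁻¹
        ≤ 4 * (|P₂ (s / L)| * |L⁻¹| * |c₀ + 1 - E| + 2 * m * (|P₁ (s / L)| * |E|)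
          + m * (|P₁ (s / L)| * |c₀ + 1 - E|)) * L⁻¹ := by
          gcongr
          refine (abs_add_three _ _ _).trans (le_of_eq ?_)
          simp only [abs_mul, abs_of_pos hm0, abs_of_pos (by norm_num : (0 : ℝ) < 2)]
      _ ≤ 4 * (M * X * 1 * (c₀ + 1) + 2 * m * (M * X * 1)
          + m * (M * X * (c₀ + 1))) * L⁻¹ := by gcongr
      _ = _ := by ring

/-- The properties of the test function `φ (t, x) = θ (t) h (log |x|²)` used in the argument. It lives on
`0 ≤ t ≤ 5T`, `1 ≤ |x| ≤ e ^ L`; `c₀` is the value of `h` on the unit sphere, `θ` equals `1` on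
`[2T, 4T]`, and `B` is the product of the two cutoffs, so that `φ` is comparable to `B ^ N` while all
the derivatives of `φ` in the weak formulation are at most `D * B ^ (N - 2) / (L |x|²)`. -/
structure TestData (N : ℕ) (α c₀ D L : ℝ) (T : ℝ) (θ : ℝ → ℝ) (φ B : ℝ → Euc N → ℝ) : Prop where
  T_pos : 0 < T
  adm : AdmissibleHyperbolic N α φ
  phi_at_zero : ∀ x, φ 0 x = 0
  dt_at_zero : ∀ x, deriv (fun s => φ s x) 0 = 0
  θ_cont : Continuous θ
  θ_nonneg : ∀ t, 0 ≤ θ t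
  θ_one : ∀ t ∈ Icc (2 * T) (4 * T), θ t = 1
  θ_zero : ∀ t, 5 * T ≤ t → θ t = 0
  bdry : ∀ t x, ‖x‖ = 1 → φ t x = θ t * c₀
  φ_zero : ∀ t x, 0 ≤ t → x ∈ extDom N → ¬ (t ≤ 5 * T ∧ ‖x‖ ≤ rexp L) → φ t x = 0
  B_zero : ∀ t x, 0 ≤ t → x ∈ extDom N → ¬ (t ≤ 5 * T ∧ ‖x‖ ≤ rexp L) → B t x = 0
  B_nonneg : ∀ t x, 0 ≤ B t x
  lower : ∀ t x, x ∈ extDom N → c₀ * B t x ^ N ≤ φ t x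
  bd_dt : ∀ t x, x ∈ extDom N →
    |deriv (fun s => φ s x) t| ≤ D * B t x ^ (N - 2) * (L * ‖x‖ ^ 2)⁻¹
  bd_dtt : ∀ t x, x ∈ extDom N →
    |deriv (deriv (fun s => φ s x)) t| ≤ D * B t x ^ (N - 2) * (L * ‖x‖ ^ 2)⁻¹
  bd_lap : ∀ t x, x ∈ extDom N →
    |lap (φ t) x| ≤ D * B t x ^ (N - 2) * (L * ‖x‖ ^ 2)⁻¹

/-- Test functions with a constant `D` independent of `L`. The time scale is `T = L e ^ (2L)`. -/
theorem exists_test (N : ℕ) (hN : 3 ≤ N) {α : ℝ} (hα : 0 < α) :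
    ∃ D : ℝ, 0 ≤ D ∧ ∀ L : ℝ, 1 ≤ L → ∃ T θ φ B,
      TestData N α (((N : ℝ) - 2) / α) D L T θ φ B := by
  obtain ⟨χ, P₁, P₂, M, hM, hχ, h0, h1, hone, hzero, d1, d2, c1, c2, hz, b1, b2⟩ :=
    exists_cutoff N hN
  have hN' : (3 : ℝ) ≤ N := by exact_mod_cast hN
  set c₀ : ℝ := ((N : ℝ) - 2) / α with hc₀
  have hc₀0 : 0 < c₀ := div_pos (by linarith) hα
  set D := 4 * M * ((c₀ + 1) + ((N : ℝ) - 2) + ((N : ℝ) - 2) / 2 * (c₀ + 1)) with hD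
  have hN2 : 0 ≤ (N : ℝ) - 2 := by linarith
  have hMD : M * (c₀ + 1) ≤ D := by
    have : 0 ≤ M * (c₀ + 1) := by positivity
    have : 0 ≤ M * ((N : ℝ) - 2) := by positivity
    have : 0 ≤ M * (((N : ℝ) - 2) / 2 * (c₀ + 1)) := by positivity
    rw [hD]; nlinarith
  have hD0 : 0 ≤ D := le_trans (by positivity) hMD
  refine ⟨D, hD0, ?_⟩
  intro L hL
  have hL0 : 0 < L := by linarith
  obtain ⟨h, h₁, h₂, hh, e1, e2, ch1, ch2, hh0, hrob, hhz, hlow, hup, hlap⟩ :=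
    exists_profile N hN hα hL hM hχ h0 h1 hone d1 d2 c1 c2 hz b1 b2
  rw [← hc₀] at hh0 hlow hup hlap
  rw [← hD] at hlap
  set T := L * rexp (2 * L) with hT
  have hT1 : 1 ≤ T := by
    have : 1 ≤ rexp (2 * L) := Real.one_le_exp (by linarith)
    nlinarith
  have hT0 : 0 < T := by linarith
  have eT : ∀ t, HasDerivAt (fun t => χ (t / T - 3) ^ N) (P₁ (t / T - 3) * T⁻¹) t := fun t => by
    have := (d1 (t / T - 3)).comp t (((hasDerivAt_id t).div_const T).sub_const 3)
    simpa [Function.comp_def] using this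
  have eT1 : ∀ t, HasDerivAt (fun t => P₁ (t / T - 3) * T⁻¹) (P₂ (t / T - 3) * T⁻¹ * T⁻¹) t :=
    fun t => by
    have := ((d2 (t / T - 3)).comp t (((hasDerivAt_id t).div_const T).sub_const 3)).mul_const T⁻¹
    simpa [Function.comp_def] using this
  have hext0 : ∀ x ∈ extDom N, x ≠ 0 := fun x hx => by
    rintro rfl
    simp [extDom] at hx
    linarith
  have hs0 : ∀ x ∈ extDom N, 0 ≤ Real.log (‖x‖ ^ 2) := fun x hx =>
    Real.log_nonneg (one_le_pow₀ hx)
  have ht5 : ∀ t, 5 * T ≤ t → χ (t / T - 3) = 0 := fun t ht => by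
    apply hzero
    have : 5 ≤ t / T := by rw [le_div_iff₀ hT0]; exact ht
    exact le_trans (by linarith) (le_abs_self _)
  have hχx : ∀ x : Euc N, rexp L ≤ ‖x‖ → χ (Real.log (‖x‖ ^ 2) / L) = 0 := fun x hx => by
    apply hzero
    refine le_trans ?_ (le_abs_self _)
    have hpos : 0 < ‖x‖ := (Real.exp_pos L).trans_le hx
    rw [le_div_iff₀ hL0, Real.le_log_iff_exp_le (by positivity), two_mul, Real.exp_add, sq]
    gcongr
  have ddt : ∀ x : Euc N, ∀ t, HasDerivAt (fun s => χ (s / T - 3) ^ N * h (Real.log (‖x‖ ^ 2)))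
      (P₁ (t / T - 3) * T⁻¹ * h (Real.log (‖x‖ ^ 2))) t := fun x t => (eT t).mul_const _
  have ddt' : ∀ x : Euc N, deriv (fun s => χ (s / T - 3) ^ N * h (Real.log (‖x‖ ^ 2))) =
      fun t => P₁ (t / T - 3) * T⁻¹ * h (Real.log (‖x‖ ^ 2)) := fun x => funext fun t => (ddt x t).deriv
  have ddtt : ∀ x : Euc N, deriv (deriv (fun s => χ (s / T - 3) ^ N * h (Real.log (‖x‖ ^ 2)))) =
      fun t => P₂ (t / T - 3) * T⁻¹ * T⁻¹ * h (Real.log (‖x‖ ^ 2)) := fun x => by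
    rw [ddt' x]
    exact funext fun t => ((eT1 t).mul_const _).deriv
  have hlogc : ContinuousOn (fun q : ℝ × Euc N => Real.log (‖q.2‖ ^ 2)) (Ici (0 : ℝ) ×ˢ extDom N) := by
    refine ContinuousOn.log (by fun_prop) fun q hq => ?_
    simpa using hext0 _ hq.2
  have hcχ := hχ.continuous
  have hch := hh.continuous
  have hlapeq : ∀ t, ∀ x ∈ extDom N,
      lap (fun y : Euc N => χ (t / T - 3) ^ N * h (Real.log (‖y‖ ^ 2))) x =
      χ (t / T - 3) ^ N * ((4 * h₂ (Real.log (‖x‖ ^ 2)) +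
        (2 * N - 4) * h₁ (Real.log (‖x‖ ^ 2))) / ‖x‖ ^ 2) := fun t x hx =>
    lap_radial e1 e2 _ (hext0 x hx)
  have hpow : ∀ s, χ s ^ N ≤ χ s ^ (N - 2) := fun s =>
    pow_le_pow_of_le_one (h0 s) (h1 s) (by omega)
  -- The choice `T = L e ^ (2L)` makes `1 / T` at most `1 / (L |x|²)` on the support `|x| ≤ e ^ L`.
  have hTi : ∀ x ∈ extDom N, T⁻¹ * |h (Real.log (‖x‖ ^ 2))| ≤
      (c₀ + 1) * χ (Real.log (‖x‖ ^ 2) / L) ^ (N - 2) * (L * ‖x‖ ^ 2)⁻¹ := by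
    intro x hx
    have hx1 : 1 ≤ ‖x‖ := hx
    by_cases hxL : rexp L ≤ ‖x‖
    · rw [hhz _ (hχx x hxL), abs_zero, mul_zero]
      have := h0 (Real.log (‖x‖ ^ 2) / L)
      positivity
    · have : L * ‖x‖ ^ 2 ≤ T := by
        rw [hT, two_mul, Real.exp_add, ← sq]
        gcongr
        exact le_of_not_ge hxL
      have h3 : T⁻¹ ≤ (L * ‖x‖ ^ 2)⁻¹ := by gcongr
      have h4 := hup _ (hs0 x hx)
      rw [mul_comm]
      exact mul_le_mul h4 h3 (by positivity) ((abs_nonneg _).trans h4)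
  have key : ∀ (G : ℝ → ℝ), (∀ s, |G s| ≤ M * χ s ^ (N - 2)) → ∀ t, ∀ x ∈ extDom N,
      |G (t / T - 3)| * (T⁻¹ * |h (Real.log (‖x‖ ^ 2))|) ≤
        D * (χ (t / T - 3) * χ (Real.log (‖x‖ ^ 2) / L)) ^ (N - 2) * (L * ‖x‖ ^ 2)⁻¹ := by
    intro G hG t x hx
    have i1 := h0 (Real.log (‖x‖ ^ 2) / L)
    have i2 := h0 (t / T - 3)
    calc |G (t / T - 3)| * (T⁻¹ * |h (Real.log (‖x‖ ^ 2))|)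
        ≤ (M * χ (t / T - 3) ^ (N - 2)) * ((c₀ + 1) * χ (Real.log (‖x‖ ^ 2) / L) ^ (N - 2)
          * (L * ‖x‖ ^ 2)⁻¹) :=
          mul_le_mul (hG _) (hTi x hx) (by positivity) (by positivity)
      _ = (M * (c₀ + 1)) * (χ (t / T - 3) * χ (Real.log (‖x‖ ^ 2) / L)) ^ (N - 2)
          * (L * ‖x‖ ^ 2)⁻¹ := by rw [mul_pow]; ring
      _ ≤ _ := by gcongr
  have hTi1 : T⁻¹ ≤ 1 := inv_le_one_of_one_le₀ hT1
  refine ⟨T, fun t => χ (t / T - 3) ^ N, fun t x => χ (t / T - 3) ^ N * h (Real.log (‖x‖ ^ 2)),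
    fun t x => χ (t / T - 3) * χ (Real.log (‖x‖ ^ 2) / L), ?_⟩
  constructor
  · exact hT0
  · constructor
    · intro t x _ hx
      have i1 := h0 (Real.log (‖x‖ ^ 2) / L)
      have i2 := h0 (t / T - 3)
      have : 0 ≤ h (Real.log (‖x‖ ^ 2)) := le_trans (by positivity) (hlow _ (hs0 x hx))
      positivity
    · intro x _
      apply ContDiff.contDiffOn
      fun_prop
    · intro t _
      refine contDiffOn_const.mul (hh.comp_contDiffOn (ContDiffOn.log ?_ ?_))
      · exact (contDiff_norm_sq ℝ).contDiffOn
      · intro x hx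
        simpa using hext0 _ hx
    · exact ContinuousOn.mul (by fun_prop) (hch.comp_continuousOn hlogc)
    · refine ⟨5 * T, by positivity, fun t ht x => ?_⟩
      simp [ht5 t ht, show N ≠ 0 by omega]
    · refine ⟨rexp L, by simpa using hL0, fun x hx t => ?_⟩
      rw [hhz _ (hχx x hx), mul_zero]
    · intro t _ x hx
      have hx0 : x ≠ 0 := by rintro rfl; simp at hx
      rw [((hasFDerivAt_logNormSq hx0 (e1 _)).const_mul _).fderiv]
      simp [hx]
      linear_combination (-(χ (t / T - 3) ^ N)) * hrob
    · simp only [ddt']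
      exact ContinuousOn.mul (by fun_prop) (hch.comp_continuousOn hlogc)
    · simp only [ddtt]
      exact ContinuousOn.mul (by fun_prop) (hch.comp_continuousOn hlogc)
    · refine ContinuousOn.congr (f := fun q : ℝ × Euc N =>
        χ (q.1 / T - 3) ^ N * ((4 * h₂ (Real.log (‖q.2‖ ^ 2)) +
        (2 * N - 4) * h₁ (Real.log (‖q.2‖ ^ 2))) / ‖q.2‖ ^ 2)) ?_ fun q hq => hlapeq q.1 q.2 hq.2
      refine ContinuousOn.mul (by fun_prop) (ContinuousOn.div ?_ (by fun_prop) ?_)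
      · exact (continuousOn_const.mul (ch2.comp_continuousOn hlogc)).add
          (continuousOn_const.mul (ch1.comp_continuousOn hlogc))
      · intro q hq
        simpa using hext0 _ hq.2
  · intro x
    have : χ (0 / T - 3) = 0 := hzero _ (by norm_num)
    rw [this, zero_pow (by omega), zero_mul]
  · intro x
    have h3 : χ (0 / T - 3) = 0 := hzero _ (by norm_num)
    have : P₁ (0 / T - 3) = 0 := by
      have := b1 (0 / T - 3)
      rw [h3, zero_pow (by omega), mul_zero] at this
      exact abs_nonpos_iff.mp this
    rw [ddt']
    dsimp only
    rw [this, zero_mul, zero_mul]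
  · fun_prop
  · intro t; exact pow_nonneg (h0 _) _
  · intro t ht
    have : χ (t / T - 3) = 1 := by
      apply hone
      have i1 : 2 ≤ t / T := by rw [le_div_iff₀ hT0]; exact ht.1
      have i2 : t / T ≤ 4 := by rw [div_le_iff₀ hT0]; exact ht.2
      rw [abs_le]; constructor <;> linarith
    simp [this]
  · intro t ht
    simp [ht5 t ht, show N ≠ 0 by omega]
  · intro t x hx
    simp [hx, hh0]
  · intro t x _ _ hn
    rw [not_and_or] at hn
    rcases hn with hn | hn
    · simp [ht5 t (le_of_not_ge hn), show N ≠ 0 by omega]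
    · rw [hhz _ (hχx x (le_of_not_ge hn)), mul_zero]
  · intro t x _ _ hn
    rw [not_and_or] at hn
    rcases hn with hn | hn
    · simp [ht5 t (le_of_not_ge hn)]
    · rw [hχx x (le_of_not_ge hn), mul_zero]
  · intro t x; exact mul_nonneg (h0 _) (h0 _)
  · intro t x hx
    have i2 := h0 (t / T - 3)
    have := hlow _ (hs0 x hx)
    calc c₀ * (χ (t / T - 3) * χ (Real.log (‖x‖ ^ 2) / L)) ^ N
        = χ (t / T - 3) ^ N * (c₀ * χ (Real.log (‖x‖ ^ 2) / L) ^ N) := by rw [mul_pow]; ring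
      _ ≤ _ := by gcongr
  · intro t x hx
    rw [ddt', abs_mul, abs_mul, abs_of_pos (inv_pos.mpr hT0), mul_assoc]
    exact key P₁ b1 t x hx
  · intro t x hx
    rw [ddtt, abs_mul, abs_mul, abs_mul, abs_of_pos (inv_pos.mpr hT0)]
    refine le_trans ?_ (key P₂ b2 t x hx)
    rw [← mul_assoc]
    gcongr
    exact mul_le_of_le_one_right (by positivity) hTi1
  · intro t x hx
    have hx1 : 1 ≤ ‖x‖ := hx
    have i2 := h0 (t / T - 3)
    have i1 := h0 (Real.log (‖x‖ ^ 2) / L)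
    rw [hlapeq t x hx, abs_mul, abs_div, abs_of_nonneg (by positivity : 0 ≤ χ (t / T - 3) ^ N),
      abs_of_nonneg (by positivity : 0 ≤ ‖x‖ ^ 2)]
    calc χ (t / T - 3) ^ N * (|4 * h₂ (Real.log (‖x‖ ^ 2)) +
          (2 * N - 4) * h₁ (Real.log (‖x‖ ^ 2))| / ‖x‖ ^ 2)
        ≤ χ (t / T - 3) ^ (N - 2) * (D * χ (Real.log (‖x‖ ^ 2) / L) ^ (N - 2) * L⁻¹ / ‖x‖ ^ 2) := by
          refine mul_le_mul (hpow _) ?_ (by positivity) (by positivity)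
          gcongr
          exact hlap _ (hs0 x hx)
      _ = _ := by rw [mul_pow, mul_inv]; ring

/-! ### The estimate and its consequence -/

/-- Testing with `φ` and absorbing `∫ |u| ^ p φ` by Young's inequality leaves a bound of the flux
`∫ f dσ` by `C L ^ (1 - N/2)`, for every `L ≥ 1`. -/
theorem key_estimate {N : ℕ} (hN : 3 ≤ N) {α : ℝ} (hα : 0 < α)
    {p : ℝ} (hp : p = (N : ℝ) / ((N : ℝ) - 2)) (u₀ u₁ f : Euc N → ℝ) (u : ℝ → Euc N → ℝ)
    (hu : IsGlobalWeakSolDampedWave N α p u₀ u₁ f u)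
    (hfpos : 0 < ∫ x : Metric.sphere (0 : Euc N) 1, f x ∂(sphMeasure N)) :
    ∃ C : ℝ, ∀ L : ℝ, 1 ≤ L → 2 * (((N : ℝ) - 2) / α) *
      (∫ x : Metric.sphere (0 : Euc N) 1, f x ∂(sphMeasure N)) ≤ C * L ^ (1 - (N : ℝ) / 2) := by
  have hN' : (3 : ℝ) ≤ N := by exact_mod_cast hN
  set F := ∫ x : Metric.sphere (0 : Euc N) 1, f x ∂(sphMeasure N) with hF
  set c₀ : ℝ := ((N : ℝ) - 2) / α with hc₀
  have hc₀0 : 0 < c₀ := div_pos (by linarith) hα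
  obtain ⟨D, hD, htest⟩ := exists_test N hN hα
  obtain ⟨C, hC, hyoung⟩ := young_cutoff hN hp hc₀0 hD
  refine ⟨15 * C * (N * (volume : Measure (Euc N)).real (Metric.ball 0 1)), ?_⟩
  intro L hL
  have hL0 : 0 < L := by linarith
  obtain ⟨T, θ, φ, B, h⟩ := htest L hL
  have hT := h.T_pos
  obtain ⟨hloc, hweak⟩ := hu
  have hid := hweak φ h.adm
  have hmext : MeasurableSet (extDom N) := measurableSet_le measurable_const measurable_norm
  have hmQ : MeasurableSet (Ioi (0 : ℝ) ×ˢ extDom N) := measurableSet_Ioi.prod hmext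
  -- The data terms vanish because the test function is supported away from `t = 0`.
  simp only [h.phi_at_zero, h.dt_at_zero, mul_zero, integral_zero, add_zero, sub_zero] at hid
  have hbd : (∫ t in Ioi (0 : ℝ), ∫ x : Metric.sphere (0 : Euc N) 1, f x * φ t x ∂(sphMeasure N))
      = (∫ t in Ioi (0 : ℝ), θ t) * (c₀ * F) := by
    rw [← integral_mul_const]
    congr 1
    ext t
    rw [hF, ← integral_const_mul, ← integral_const_mul]
    congr 1
    ext x
    rw [h.bdry t x (by simp)]
    ring
  have hθint : IntegrableOn θ (Ioi 0) := by
    refine IntegrableOn.of_forall_sdiff_eq_zero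
      (h.θ_cont.continuousOn.integrableOn_compact (isCompact_Icc (a := 0) (b := 5 * T)))
      measurableSet_Ioi fun t ht => ?_
    apply h.θ_zero
    by_contra hcon
    exact ht.2 ⟨le_of_lt ht.1, (not_le.mp hcon).le⟩
  have hθ : 2 * T ≤ ∫ t in Ioi (0 : ℝ), θ t := by
    have hsub : Icc (2 * T) (4 * T) ⊆ Ioi 0 := fun t ht => by
      have := ht.1; simp only [mem_Ioi]; linarith
    calc 2 * T = ∫ t in Icc (2 * T) (4 * T), (1 : ℝ) := by
          simp
          rw [max_eq_left (by linarith)]; ring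
      _ = ∫ t in Icc (2 * T) (4 * T), θ t :=
          setIntegral_congr_fun measurableSet_Icc fun t ht => (h.θ_one t ht).symm
      _ ≤ _ := setIntegral_mono_set hθint (Filter.Eventually.of_forall h.θ_nonneg)
          (Filter.Eventually.of_forall hsub)
  have hI : IntegrableOn (fun q : ℝ × Euc N => |u q.1 q.2| ^ p * φ q.1 q.2)
      (Ioi (0 : ℝ) ×ˢ extDom N) := by
    have hcl : IsClosed (extDom N) := isClosed_le continuous_const continuous_norm
    have hK : IsCompact (Icc 0 (5 * T) ×ˢ (extDom N ∩ Metric.closedBall 0 (rexp L))) :=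
      isCompact_Icc.prod ((isCompact_closedBall _ _).inter_left hcl)
    have hsub : Icc 0 (5 * T) ×ˢ (extDom N ∩ Metric.closedBall 0 (rexp L)) ⊆
        Ici (0 : ℝ) ×ˢ extDom N := prod_mono Icc_subset_Ici_self inter_subset_left
    refine IntegrableOn.of_forall_sdiff_eq_zero
      ((hloc.integrableOn_compact_subset hsub hK).mul_continuousOn (h.adm.cont.mono hsub) hK)
      hmQ fun q hq => ?_
    rw [h.φ_zero q.1 q.2 (le_of_lt hq.1.1) hq.1.2, mul_zero]
    rintro ⟨i1, i2⟩
    exact hq.2 ⟨⟨le_of_lt hq.1.1, i1⟩, hq.1.2, by simpa using i2⟩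
  set W : Euc N → ℝ := fun x => (Icc 1 (rexp L)).indicator
      (fun r => ((L * r ^ 2)⁻¹) ^ ((N : ℝ) / 2)) ‖x‖ with hW
  obtain ⟨hWi, hWe⟩ := integral_annulus hN hL
  have hW0 : ∀ x, 0 ≤ W x := fun x => indicator_nonneg (fun r _ => by positivity) _
  set Z : ℝ → ℝ := (Icc 0 (5 * T)).indicator fun _ => (1 : ℝ) with hZ
  have hZi : IntegrableOn Z (Ioi 0) :=
    ((integrableOn_const measure_Icc_lt_top.ne).integrable_indicator measurableSet_Icc).integrableOn
  have hZe : ∫ t in Ioi (0 : ℝ), Z t ≤ 5 * T := by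
    calc ∫ t in Ioi (0 : ℝ), Z t ≤ ∫ t, Z t :=
          setIntegral_le_integral ((integrableOn_const measure_Icc_lt_top.ne).integrable_indicator
            measurableSet_Icc)
            (Filter.Eventually.of_forall fun t => indicator_nonneg (by simp) _)
      _ = 5 * T := by
          rw [hZ, integral_indicator measurableSet_Icc]
          simp; linarith
  have hZWi : IntegrableOn (fun q : ℝ × Euc N => Z q.1 * W q.2) (Ioi (0 : ℝ) ×ˢ extDom N) := by
    have := Integrable.mul_prod hZi (hWi.integrableOn (s := extDom N))
    rwa [Measure.prod_restrict] at this
  have hZWe : ∫ q in Ioi (0 : ℝ) ×ˢ extDom N, Z q.1 * W q.2 ≤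
      5 * T * ((N * (volume : Measure (Euc N)).real (Metric.ball 0 1)) * L ^ (1 - (N : ℝ) / 2)) := by
    have : ∫ q in Ioi (0 : ℝ) ×ˢ extDom N, Z q.1 * W q.2 =
        (∫ t in Ioi (0 : ℝ), Z t) * ∫ x in extDom N, W x := setIntegral_prod_mul _ _ _ _
    rw [this, ← hWe]
    have hle : ∫ x in extDom N, W x ≤ ∫ x, W x :=
      setIntegral_le_integral hWi (Filter.Eventually.of_forall hW0)
    have h0 : 0 ≤ ∫ x in extDom N, W x := integral_nonneg hW0
    gcongr
  set I := ∫ q in Ioi (0 : ℝ) ×ˢ extDom N, |u q.1 q.2| ^ p * φ q.1 q.2 with hIdef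
  set J := ∫ q in Ioi (0 : ℝ) ×ˢ extDom N, Z q.1 * W q.2 with hJdef
  -- `u` need not be measurable: `norm_integral_le_of_norm_le` only needs an integrable majorant, and a
  -- non-integrable `u * g` has integral `0`.
  have hgen : ∀ g : ℝ → Euc N → ℝ, (∀ t x, x ∈ extDom N →
      |g t x| ≤ D * B t x ^ (N - 2) * (L * ‖x‖ ^ 2)⁻¹) →
      |∫ q in Ioi (0 : ℝ) ×ˢ extDom N, u q.1 q.2 * g q.1 q.2| ≤ 1 / 3 * I + C * J := by
    intro g hg
    rw [hIdef, hJdef, ← integral_const_mul, ← integral_const_mul,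
      ← integral_add (hI.const_mul _) (hZWi.const_mul _), ← Real.norm_eq_abs]
    refine norm_integral_le_of_norm_le ((hI.const_mul _).add (hZWi.const_mul _)) ?_
    filter_upwards [ae_restrict_mem hmQ] with q hq
    have hq1 : 0 ≤ q.1 := le_of_lt hq.1
    have hq2 : 1 ≤ ‖q.2‖ := hq.2
    rw [Real.norm_eq_abs]
    by_cases hin : q.1 ≤ 5 * T ∧ ‖q.2‖ ≤ rexp L
    · have e1 : Z q.1 = 1 := indicator_of_mem (show q.1 ∈ Icc 0 (5 * T) from ⟨hq1, hin.1⟩) _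
      have e2 : W q.2 = ((L * ‖q.2‖ ^ 2)⁻¹) ^ ((N : ℝ) / 2) :=
        indicator_of_mem (show ‖q.2‖ ∈ Icc 1 (rexp L) from ⟨hq2, hin.2⟩) _
      have := hyoung (u q.1 q.2) (B q.1 q.2) ((L * ‖q.2‖ ^ 2)⁻¹) (φ q.1 q.2) (g q.1 q.2)
        (h.B_nonneg _ _) (by positivity) (h.lower _ _ hq.2) (hg _ _ hq.2)
      simpa only [e1, e2, one_mul] using this
    · have e1 : g q.1 q.2 = 0 := by
        have := hg q.1 q.2 hq.2
        rw [h.B_zero _ _ hq1 hq.2 hin, zero_pow (by omega), mul_zero, zero_mul] at this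
        exact abs_nonpos_iff.mp this
      have i1 : 0 ≤ Z q.1 := indicator_nonneg (by simp) _
      have i2 := hW0 q.2
      have i3 := h.adm.nonneg q.1 q.2 hq1 hq.2
      rw [e1, mul_zero, abs_zero]
      positivity
  have t1 := hgen (fun t x => deriv (fun s => φ s x) t) h.bd_dt
  have t2 := hgen (fun t x => deriv (deriv (fun s => φ s x)) t) h.bd_dtt
  have t3 := hgen (fun t x => lap (φ t) x) h.bd_lap
  rw [hbd] at hid
  have hmain : 2 * T * (c₀ * F) ≤ 3 * C * J := by
    have i1 : 2 * T * (c₀ * F) ≤ (∫ t in Ioi (0 : ℝ), θ t) * (c₀ * F) := by gcongr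
    have a1 := (abs_le.mp t1).1
    have a2 := (abs_le.mp t2).2
    have a3 := (abs_le.mp t3).1
    linarith
  have h2 : 3 * C * J ≤ 3 * C * (5 * T * ((N * (volume : Measure (Euc N)).real (Metric.ball 0 1))
      * L ^ (1 - (N : ℝ) / 2))) := by gcongr
  have h3 := hmain.trans h2
  refine le_of_mul_le_mul_left (a := T) ?_ hT
  linarith

/-- For `N ≥ 3`, `α > 0`, `p = N/(N-2)`, `u₀, u₁ ∈ L¹_loc(Ω^c)` and
`f ∈ L¹(∂Ω)` with `∫_{∂Ω} f dσ > 0`, the exterior Robin damped wave problem possesses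
no global in time weak solution. -/
theorem damped_wave_critical_no_global_weak_solution
    (N : ℕ) (hN : 3 ≤ N) (α : ℝ) (hα : 0 < α)
    (p : ℝ) (hp : p = (N : ℝ) / ((N : ℝ) - 2))
    (u₀ u₁ : Euc N → ℝ)
    (hu₀ : LocallyIntegrableOn u₀ (extDom N) volume)
    (hu₁ : LocallyIntegrableOn u₁ (extDom N) volume)
    (f : Euc N → ℝ)
    (hf : Integrable (fun x : Metric.sphere (0 : Euc N) 1 => f x) (sphMeasure N))
    (hfpos : 0 < ∫ x : Metric.sphere (0 : Euc N) 1, f x ∂(sphMeasure N)) :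
    ¬ ∃ u : ℝ → Euc N → ℝ, IsGlobalWeakSolDampedWave N α p u₀ u₁ f u := by
  rintro ⟨u, hu⟩
  obtain ⟨C, hC⟩ := key_estimate hN hα hp u₀ u₁ f u hu hfpos
  have hN' : (3 : ℝ) ≤ N := by exact_mod_cast hN
  have hlim : Filter.Tendsto (fun L : ℝ => C * L ^ (1 - (N : ℝ) / 2)) Filter.atTop (nhds 0) := by
    have := (tendsto_rpow_neg_atTop (y := (N : ℝ) / 2 - 1) (by linarith)).const_mul C
    simpa using this
  have hle := ge_of_tendsto hlim (Filter.eventually_atTop.mpr ⟨1, hC⟩)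
  have hpos : 0 < 2 * (((N : ℝ) - 2) / α) *
      ∫ x : Metric.sphere (0 : Euc N) 1, f x ∂(sphMeasure N) := by
    have : 0 < (N : ℝ) - 2 := by linarith
    positivity
  linarith
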